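/- Let d ∈ ℕ, let A_1, …, A_d be positive real numbers, and let Φ = Φ_A. Let P be a d-tuple of integer polynomials, P(n) = (P_1(n),…,P_d(n)), such that the real polynomial ∑_{i=1}^d A_i P_i(n) is nonconstant, and let g ∈ ℤ^d with −g ∈ Φ. Then there exist Q ∈ ℕ and L ∈ ℕ such that either for all n > L and all i ∈ {0,1,…,Q−1} one has g + P((n−1)Q+i) <_Φ P(nQ+i), or for all n > L and all i ∈ {0,1,…,Q−1} one has g + P((n+1)Q+i) <_Φ P(nQ+i). -/

import Mathlib

open Finset

/-- The partial weighted sum `∑_{l=1}^{t} A_l n_l`. -/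
noncomputable def phiSum {d : ℕ} (A : Fin d → ℝ) (n : Fin d → ℤ) (t : ℕ) : ℝ :=
  ∑ l : Fin d, if (l : ℕ) < t then A l * (n l : ℝ) else 0

/-- The algebraic past `Φ_A ⊆ ℤ^d` associated to positive weights `A_1, …, A_d`. -/
noncomputable def PhiA {d : ℕ} (A : Fin d → ℝ) : Set (Fin d → ℤ) :=
  {n | ∃ j < d, (∀ k < j, phiSum A n (d - k) = 0) ∧ phiSum A n (d - j) < 0}

/-!
Let `W = ∑ A_i P_i`. Its derivative is a nonzero polynomial, hence of constant sign and bounded away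
from `0` near `+∞`; if, say, `W' ≥ ε > 0` there, then `W (m + Q) - W m ≥ ε Q` by the mean value
theorem, and a large `Q` makes this exceed `∑ A_i g_i`. Then the full weighted sum of
`g + P m - P (m + Q)` is negative, which is membership in `Φ_A` at the first level `j = 0`.
-/

open Polynomial Filter

theorem eventually_eventually_lt_sub_of_le_deriv {f : ℝ → ℝ} {ε : ℝ} (hε : 0 < ε)
    (hf : ∀ᶠ x in atTop, ε ≤ deriv f x) (c : ℝ) :
    ∀ᶠ q in atTop, ∀ᶠ x in atTop, c < f (x + q) - f x := by
  obtain ⟨M, hM⟩ := eventually_atTop.1 hf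
  have hdiff : ∀ x ≥ M, DifferentiableAt ℝ f x := fun x hx =>
    differentiableAt_of_deriv_ne_zero (hε.trans_le (hM x hx)).ne'
  filter_upwards [eventually_ge_atTop 0, eventually_gt_atTop (c / ε)] with q hq hcq
  filter_upwards [eventually_ge_atTop M] with x hx
  have hmvt : ε * (x + q - x) ≤ f (x + q) - f x :=
    (convex_Ici M).mul_sub_le_image_sub_of_le_deriv
      (fun y hy => (hdiff y hy).continuousAt.continuousWithinAt)
      (fun y hy => (hdiff y (interior_subset hy)).differentiableWithinAt)
      (fun y hy => hM y (interior_subset hy)) x hx (x + q) (le_add_of_le_of_nonneg hx hq)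
      (le_add_of_nonneg_right hq)
  calc c < ε * q := (div_lt_iff₀' hε).1 hcq
    _ = ε * (x + q - x) := by rw [add_sub_cancel_left]
    _ ≤ f (x + q) - f x := hmvt

theorem natDegree_pos_of_eval_ne {R : Type*} [Semiring R] {p : R[X]} {x y : R}
    (h : p.eval x ≠ p.eval y) : 0 < p.natDegree := by
  refine Nat.pos_of_ne_zero fun hp => h ?_
  rw [eq_C_of_natDegree_eq_zero hp, eval_C, eval_C]

theorem exists_pos_eventually_le_eval {𝕜 : Type*} [NormedField 𝕜] [LinearOrder 𝕜]
    [IsStrictOrderedRing 𝕜] [OrderTopology 𝕜] {p : 𝕜[X]} (hp : 0 < p.leadingCoeff) :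
    ∃ ε > 0, ∀ᶠ x in atTop, ε ≤ p.eval x := by
  rcases lt_or_ge 0 p.degree with hdeg | hdeg
  · exact ⟨1, one_pos,
      (tendsto_atTop_of_leadingCoeff_nonneg p hdeg hp.le).eventually_ge_atTop 1⟩
  · refine ⟨p.leadingCoeff, hp, .of_forall fun x => ?_⟩
    rw [eq_C_of_degree_le_zero hdeg, eval_C, leadingCoeff_C]

theorem eventually_eventually_lt_eval_add_sub_eval {p : ℝ[X]} (hdeg : 0 < p.natDegree)
    (hlc : 0 < p.leadingCoeff) (c : ℝ) :
    ∀ᶠ q in atTop, ∀ᶠ x in atTop, c < p.eval (x + q) - p.eval x := by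
  have hlc' : 0 < p.derivative.leadingCoeff := by
    rw [leadingCoeff_derivative]
    exact mul_pos hlc (Nat.cast_pos.2 hdeg)
  obtain ⟨ε, hε, hp⟩ := exists_pos_eventually_le_eval hlc'
  exact eventually_eventually_lt_sub_of_le_deriv (f := fun x => p.eval x) hε
    (by simpa only [Polynomial.deriv] using hp) c

theorem exists_nat_shift_lt_eval_sub {p : ℝ[X]} (hdeg : 0 < p.natDegree)
    (hlc : 0 < p.leadingCoeff) (c : ℝ) :
    ∃ Q L : ℕ, 0 < Q ∧ ∀ m ≥ L, c < p.eval ((m + Q : ℕ) : ℝ) - p.eval (m : ℝ) := by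
  have hshift := tendsto_natCast_atTop_atTop.eventually
    (eventually_eventually_lt_eval_add_sub_eval hdeg hlc c)
  obtain ⟨Q, hQ, hQpos⟩ := (hshift.and (eventually_gt_atTop 0)).exists
  obtain ⟨L, hL⟩ := eventually_atTop.1 (tendsto_natCast_atTop_atTop.eventually hQ)
  exact ⟨Q, L, hQpos, fun m hm => by simpa only [Nat.cast_add] using hL m hm⟩

section WeightedSum

variable {ι : Type*} [Fintype ι]

/-- The real polynomial `∑ i, A i * P i`, whose value at `n` is the full weighted sum of the
integer vector `P n`. -/
noncomputable def weightedSum (A : ι → ℝ) (P : ι → ℤ[X]) : ℝ[X] :=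
  ∑ i, C (A i) * (P i).map (Int.castRingHom ℝ)

theorem eval_intCast_weightedSum (A : ι → ℝ) (P : ι → ℤ[X]) (n : ℤ) :
    (weightedSum A P).eval (n : ℝ) = ∑ i, A i * (((P i).eval n : ℤ) : ℝ) := by
  simp [weightedSum, eval_finsetSum, eval_intCast_map]

end WeightedSum

section Past

variable {d : ℕ} {A : Fin d → ℝ}

theorem mem_PhiA_of_sum_neg {v : Fin d → ℤ} (h : ∑ l, A l * (v l : ℝ) < 0) : v ∈ PhiA A := by
  have hd : 0 < d := Nat.pos_of_ne_zero <| by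
    rintro rfl
    simp at h
  exact ⟨0, hd, by simp, by simpa [phiSum] using h⟩

theorem add_eval_sub_eval_mem_PhiA {P : Fin d → ℤ[X]} {g : Fin d → ℤ} {a b : ℤ}
    (h : ∑ l, A l * (g l : ℝ) < (weightedSum A P).eval (b : ℝ) - (weightedSum A P).eval (a : ℝ)) :
    (fun l => g l + (P l).eval a - (P l).eval b) ∈ PhiA A := by
  apply mem_PhiA_of_sum_neg
  rw [eval_intCast_weightedSum, eval_intCast_weightedSum] at h
  simp only [Int.cast_sub, Int.cast_add, mul_sub, mul_add, sum_sub_distrib, sum_add_distrib]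
  linarith

theorem exists_shift_mem_PhiA {P : Fin d → ℤ[X]} (hP : 0 < (weightedSum A P).natDegree)
    (g : Fin d → ℤ) :
    ∃ Q L : ℕ, 0 < Q ∧
      ((∀ m ≥ L, (fun l => g l + (P l).eval (m : ℤ) - (P l).eval ((m + Q : ℕ) : ℤ)) ∈ PhiA A) ∨
       (∀ m ≥ L, (fun l => g l + (P l).eval ((m + Q : ℕ) : ℤ) - (P l).eval (m : ℤ)) ∈ PhiA A)) := by
  set W := weightedSum A P with hW
  have hlc : W.leadingCoeff ≠ 0 := leadingCoeff_ne_zero.2 (ne_zero_of_natDegree_gt hP)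
  rcases hlc.lt_or_gt with hneg | hpos
  · obtain ⟨Q, L, hQ, hL⟩ := exists_nat_shift_lt_eval_sub (p := -W) (by rwa [natDegree_neg])
      (by rwa [leadingCoeff_neg, neg_pos]) (∑ l, A l * (g l : ℝ))
    refine ⟨Q, L, hQ, .inr fun m hm => add_eval_sub_eval_mem_PhiA ?_⟩
    simpa only [← hW, eval_neg, neg_sub_neg, Int.cast_natCast] using hL m hm
  · obtain ⟨Q, L, hQ, hL⟩ := exists_nat_shift_lt_eval_sub hP hpos (∑ l, A l * (g l : ℝ))
    refine ⟨Q, L, hQ, .inl fun m hm => add_eval_sub_eval_mem_PhiA ?_⟩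
    simpa only [Int.cast_natCast] using hL m hm

end Past

theorem exists_block_phi_increasing_general
    (d : ℕ) (A : Fin d → ℝ) (P : Fin d → Polynomial ℤ)
    (hnc : ∃ n₁ n₂ : ℤ,
      ∑ i, A i * (((P i).eval n₁ : ℤ) : ℝ) ≠ ∑ i, A i * (((P i).eval n₂ : ℤ) : ℝ))
    (g : Fin d → ℤ) :
    ∃ Q L : ℕ, 0 < Q ∧
      ((∀ n : ℕ, L < n → ∀ i : ℕ, i < Q →
          (fun t => g t + (P t).eval (((n - 1) * Q + i : ℕ) : ℤ) -
            (P t).eval ((n * Q + i : ℕ) : ℤ)) ∈ PhiA A) ∨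
       (∀ n : ℕ, L < n → ∀ i : ℕ, i < Q →
          (fun t => g t + (P t).eval (((n + 1) * Q + i : ℕ) : ℤ) -
            (P t).eval ((n * Q + i : ℕ) : ℤ)) ∈ PhiA A)) := by
  obtain ⟨n₁, n₂, hne⟩ := hnc
  rw [← eval_intCast_weightedSum, ← eval_intCast_weightedSum] at hne
  obtain ⟨Q, L, hQ, hshift⟩ := exists_shift_mem_PhiA (natDegree_pos_of_eval_ne hne) g
  have hblock : ∀ n ≥ L, ∀ i, L ≤ n * Q + i := fun n hn i =>
    hn.trans ((Nat.le_mul_of_pos_right n hQ).trans (Nat.le_add_right _ i))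
  have hnext : ∀ n i, n * Q + i + Q = (n + 1) * Q + i := fun n i => by ring
  refine ⟨Q, L, hQ, hshift.imp (fun h n hn i _ => ?_) (fun h n hn i _ => ?_)⟩
  · have hpred : n - 1 + 1 = n := Nat.sub_add_cancel (Nat.one_le_of_lt hn)
    simpa only [hnext, hpred] using h _ (hblock (n - 1) (Nat.le_sub_one_of_lt hn) i)
  · simpa only [hnext] using h _ (hblock n hn.le i)

/-- If `∑_i A_i P_i(n)` is nonconstant and `-g ∈ Φ_A`, then there are `Q, L ∈ ℕ` such that
either `g + P((n-1)Q+i) <_Φ P(nQ+i)` for all `n > L` and `0 ≤ i < Q`, or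
`g + P((n+1)Q+i) <_Φ P(nQ+i)` for all `n > L` and `0 ≤ i < Q`. -/
theorem exists_block_phi_increasing
    (d : ℕ) (A : Fin d → ℝ) (hA : ∀ i, 0 < A i)
    (P : Fin d → Polynomial ℤ)
    (hnc : ∃ n₁ n₂ : ℤ,
      ∑ i, A i * (((P i).eval n₁ : ℤ) : ℝ) ≠ ∑ i, A i * (((P i).eval n₂ : ℤ) : ℝ))
    (g : Fin d → ℤ) (hg : -g ∈ PhiA A) :
    ∃ Q L : ℕ, 0 < Q ∧
      ((∀ n : ℕ, L < n → ∀ i : ℕ, i < Q →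
          (fun t => g t + (P t).eval (((n - 1) * Q + i : ℕ) : ℤ) -
            (P t).eval ((n * Q + i : ℕ) : ℤ)) ∈ PhiA A) ∨
       (∀ n : ℕ, L < n → ∀ i : ℕ, i < Q →
          (fun t => g t + (P t).eval (((n + 1) * Q + i : ℕ) : ℤ) -
            (P t).eval ((n * Q + i : ℕ) : ℤ)) ∈ PhiA A)) :=
  exists_block_phi_increasing_general d A P hnc g
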